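/- Let ν > 0, x₀ > 0, and let a, c, b : ℝ → ℝ with c differentiable at x₀, c(x₀) ≠ 0, satisfying c'(x₀) = a(x₀) − (ν/x₀)c(x₀) and c'(x₀) = −b(x₀) + (ν/x₀)c(x₀). Then (x₀c'(x₀)/c(x₀))² = x₀²·Δ(x₀)/c(x₀)² + ν² − x₀², where Δ(x₀) = c(x₀)² − a(x₀)b(x₀). Consequently, if the Turán inequality Δ(x₀) > c(x₀)²/(ν+1) holds, then (x₀c'(x₀)/c(x₀))² > ν² − (ν/(ν+1))·x₀², while if Δ(x₀) < c(x₀)²/(ν+1) then (x₀c'(x₀)/c(x₀))² < ν² − (ν/(ν+1))·x₀². -/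

import Mathlib

/-!
The two recurrences give `a = c' + (ν / x) c` and `b = (ν / x) c - c'`, so `a b` is a difference of
squares. Hence `(x c' / c) ^ 2` is a strictly increasing affine function of the Turánian, and the
bound `ν ^ 2 - ν / (ν + 1) * x ^ 2` is the value of that function at `c ^ 2 / (ν + 1)`.
-/

/-- The Turánian `Δ_ν = C_ν ^ 2 - C_{ν-1} C_{ν+1}` of three consecutive values `a = C_{ν-1}`,
`c = C_ν`, `b = C_{ν+1}` of a sequence of functions at one point. -/
def turanian {R : Type*} [CommRing R] (a c b : R) : R := c ^ 2 - a * b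

theorem turanian_eq_of_recurrences {R : Type*} [CommRing R] {a b c d m : R}
    (h_lower : d = a - m * c) (h_upper : d = -b + m * c) :
    turanian a c b = c ^ 2 + d ^ 2 - (m * c) ^ 2 := by
  have ha : a = d + m * c := by rw [h_lower, sub_add_cancel]
  have hb : b = m * c - d := by rw [h_upper]; ring
  rw [turanian, ha, hb]
  ring

section Field

variable {K : Type*} [Field K]

theorem sq_mul_div_eq_turanian_of_recurrences {ν x a b c d : K} (hx : x ≠ 0) (hc : c ≠ 0)
    (h_lower : d = a - ν / x * c) (h_upper : d = -b + ν / x * c) :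
    (x * d / c) ^ 2 = x ^ 2 * turanian a c b / c ^ 2 + ν ^ 2 - x ^ 2 := by
  rw [turanian_eq_of_recurrences h_lower h_upper]
  field

theorem sq_mul_sq_div_add_one_div_sq_add_sub {ν x c : K} (hν : ν + 1 ≠ 0) (hc : c ≠ 0) :
    x ^ 2 * (c ^ 2 / (ν + 1)) / c ^ 2 + ν ^ 2 - x ^ 2 = ν ^ 2 - ν / (ν + 1) * x ^ 2 := by
  field

theorem strictMono_sq_mul_div_sq_add_sub [LinearOrder K] [IsStrictOrderedRing K] {x c : K}
    (hx : x ≠ 0) (hc : c ≠ 0) (p q : K) :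
    StrictMono fun t : K ↦ x ^ 2 * t / c ^ 2 + p - q := by
  intro s t hst
  dsimp only
  gcongr

end Field

theorem logDeriv_sq_bound_general {ν x : ℝ} (hν : ν + 1 ≠ 0) (hx : x ≠ 0) {a c b : ℝ → ℝ}
    (hc : c x ≠ 0) (h_lower : HasDerivAt c (a x - ν / x * c x) x)
    (h_upper : HasDerivAt c (-b x + ν / x * c x) x) :
    (x * deriv c x / c x) ^ 2 =
      x ^ 2 * turanian (a x) (c x) (b x) / c x ^ 2 + ν ^ 2 - x ^ 2 ∧
    (ν ^ 2 - ν / (ν + 1) * x ^ 2 < (x * deriv c x / c x) ^ 2 ↔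
      c x ^ 2 / (ν + 1) < turanian (a x) (c x) (b x)) ∧
    ((x * deriv c x / c x) ^ 2 < ν ^ 2 - ν / (ν + 1) * x ^ 2 ↔
      turanian (a x) (c x) (b x) < c x ^ 2 / (ν + 1)) := by
  have identity := sq_mul_div_eq_turanian_of_recurrences hx hc h_lower.deriv h_upper.deriv
  have mono := strictMono_sq_mul_div_sq_add_sub hx hc (ν ^ 2) (x ^ 2)
  refine ⟨identity, ?_⟩
  rw [identity, ← sq_mul_sq_div_add_one_div_sq_add_sub hν hc]
  exact ⟨mono.lt_iff_lt, mono.lt_iff_lt⟩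

/-- If `c` is differentiable at `x₀ > 0` with `c(x₀) ≠ 0` and the recurrences
`c'(x₀) = a(x₀) − (ν/x₀)c(x₀)`, `c'(x₀) = −b(x₀) + (ν/x₀)c(x₀)` hold, then
`(x₀c'(x₀)/c(x₀))² = x₀²Δ(x₀)/c(x₀)² + ν² − x₀²` for the Turánian
`Δ(x₀) = c(x₀)² − a(x₀)b(x₀)`; consequently the Turán inequality
`Δ(x₀) > c(x₀)²/(ν+1)` implies `(x₀c'(x₀)/c(x₀))² > ν² − (ν/(ν+1))x₀²` and the
reversed inequality implies the reversed conclusion. -/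
theorem logDeriv_sq_bound (ν x₀ : ℝ) (hν : 0 < ν) (hx₀ : 0 < x₀) (a c b : ℝ → ℝ)
    (hc : DifferentiableAt ℝ c x₀) (hc0 : c x₀ ≠ 0)
    (h1 : deriv c x₀ = a x₀ - (ν / x₀) * c x₀)
    (h2 : deriv c x₀ = -b x₀ + (ν / x₀) * c x₀) :
    (x₀ * deriv c x₀ / c x₀) ^ 2 =
      x₀ ^ 2 * (c x₀ ^ 2 - a x₀ * b x₀) / c x₀ ^ 2 + ν ^ 2 - x₀ ^ 2 ∧
    (c x₀ ^ 2 / (ν + 1) < c x₀ ^ 2 - a x₀ * b x₀ →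
      ν ^ 2 - (ν / (ν + 1)) * x₀ ^ 2 < (x₀ * deriv c x₀ / c x₀) ^ 2) ∧
    (c x₀ ^ 2 - a x₀ * b x₀ < c x₀ ^ 2 / (ν + 1) →
      (x₀ * deriv c x₀ / c x₀) ^ 2 < ν ^ 2 - (ν / (ν + 1)) * x₀ ^ 2) := by
  obtain ⟨identity, lower, upper⟩ := logDeriv_sq_bound_general (by positivity) hx₀.ne' hc0
    (h1 ▸ hc.hasDerivAt) (h2 ▸ hc.hasDerivAt)
  exact ⟨identity, lower.mpr, upper.mpr⟩
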